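/- arXiv:1003.2338 — 2 statements merged into one kernel-verified Lean document; each statement's English description precedes it below -/
import Mathlib

section
/- Let Φ : Mₙ(ℂ) → M_d(ℂ) be a unital positive linear map, A positive semidefinite, and p, q, r ≥ 0 with min{p,r} ≤ q/2 and max{p,r} ≤ q. Then there exists a unitary V ∈ M_d(ℂ) such that |Φ(A^p)Φ(A^q)Φ(A^r)| ≤ V Φ(A^{p+q+r}) V*. -/
open scoped Matrix ComplexOrder

/-- `A^p` for a matrix, via continuous functional calculus with the real power function. -/
noncomputable def mpow {n : ℕ} (A : Matrix (Fin n) (Fin n) ℂ) (p : ℝ) : Matrix (Fin n) (Fin n) ℂ :=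
  cfc (fun x : ℝ => x ^ p) A

/-- Matrix absolute value `|X| = (XᴴX)^{1/2}`. -/
noncomputable def matAbs {n : ℕ} (X : Matrix (Fin n) (Fin n) ℂ) : Matrix (Fin n) (Fin n) ℂ :=
  cfc Real.sqrt (Xᴴ * X)

/-- Loewner order: `X ≤ Y` iff `Y - X` is positive semidefinite. -/
def loewnerLE {n : ℕ} (X Y : Matrix (Fin n) (Fin n) ℂ) : Prop := (Y - X).PosSemidef

/-!
Applying a positive map `Φ` to the Bernstein partition of unity of `a` gives the Cauchy–Schwarz
inequality `y* Φ(a) + Φ(a) y ≤ Φ(a²) + y* Φ(1) y`. Used for the maps `x ↦ Φ(k* x k)` as well, it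
shows that the set of `t` with `Φ(a ^ t) ≤ Φ(a) ^ t` is closed under midpoints, so that it contains
`[0, 1]`. With `s = p + q + r`, this yields `b ≤ c` for `b = Φ(a ^ q)` and `c = Φ(a ^ s) ^ (q / s)`,
together with `Φ(a ^ p)² ≤ c ^ (2 p / q)` and `Φ(a ^ r)² ≤ b ^ (2 r / q)` when `r ≤ p`. The first
of these two bounds gives `|Φ(a ^ p) Φ(a ^ q) Φ(a ^ r)| ≤ |w|` for `w = c ^ (p / q) b Φ(a ^ r)`,
and the second gives `|w*|² ≤ c ^ (p / q) b ^ (2 + 2 r / q) c ^ (p / q)`, so by Furuta's inequality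
`|w*| ≤ c ^ (1 + (p + r) / q) = Φ(a ^ s)`. The unitary of the polar decomposition of `w`
conjugates `|w*|` to `|w|`. Singular `a` are reached as limits, the unitary group being compact.
-/

section PolarDecomposition

variable {A : Type*} [CStarAlgebra A] [PartialOrder A] [StarOrderedRing A]

theorem isStrictlyPositive_star_mul_self {z : A} (hz : IsUnit z) :
    IsStrictlyPositive (star z * z) :=
  (hz.star.mul hz).isStrictlyPositive (star_mul_self_nonneg z)

theorem unitary_conj_rpow {a : A} (ha : IsStrictlyPositive a) (u : unitary A) (t : ℝ) :
    ((u : A) * a * star (u : A)) ^ t = u * a ^ t * star (u : A) := by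
  have hconj : 0 ≤ (u : A) * a * star (u : A) := star_right_conjugate_nonneg ha.nonneg _
  have hcont : Continuous (Unitary.conjStarAlgAut ℝ A u) := by
    change Continuous fun x => (u : A) * x * star (u : A)
    fun_prop
  rw [CFC.rpow_eq_cfc_real, CFC.rpow_eq_cfc_real (ha := ha.nonneg)]
  exact (StarAlgHomClass.map_cfc (S := ℝ) (Unitary.conjStarAlgAut ℝ A u) (fun x : ℝ => x ^ t) a
    (hf := fun x hx =>
      (Real.continuousAt_rpow_const x t (.inl (ha.spectrum_pos hx).ne')).continuousWithinAt)
    (hφ := hcont) (ha := ha.isSelfAdjoint) (hφa := hconj.isSelfAdjoint)).symm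

theorem exists_unitary_eq_mul_abs {z : A} (hz : IsUnit z) :
    ∃ u : unitary A, z = u * CFC.abs z := by
  have habs : IsUnit (CFC.abs z) := (isStrictlyPositive_star_mul_self hz).sqrt.isUnit
  set m := CFC.abs z
  have hinv : star (Ring.inverse m) = Ring.inverse m := by
    rw [← Ring.inverse_star, (CFC.abs_nonneg z).isSelfAdjoint.star_eq]
  have hisometry : star (z * Ring.inverse m) * (z * Ring.inverse m) = 1 := calc
    _ = Ring.inverse m * (star z * z) * Ring.inverse m := by
      rw [star_mul, hinv]; simp only [mul_assoc]
    _ = 1 := by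
      rw [← CFC.abs_mul_abs, ← mul_assoc, Ring.inverse_mul_cancel _ habs, one_mul,
        Ring.mul_inverse_cancel _ habs]
  refine ⟨⟨z * Ring.inverse m,
    (hz.mul habs.ringInverse).mem_unitary_of_star_mul_self hisometry⟩, ?_⟩
  rw [mul_assoc, Ring.inverse_mul_cancel _ habs, mul_one]

theorem unitary_conj_star_mul_self {z : A} {u : unitary A} (hu : z = u * CFC.abs z) :
    (u : A) * (star z * z) * star (u : A) = z * star z := by
  conv_rhs => rw [hu, star_mul, (CFC.abs_nonneg z).isSelfAdjoint.star_eq]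
  rw [← CFC.abs_mul_abs]
  simp only [mul_assoc]

theorem exists_unitary_abs_star_eq_conj_abs {z : A} (hz : IsUnit z) :
    ∃ u : unitary A, CFC.abs (star z) = u * CFC.abs z * star (u : A) := by
  obtain ⟨u, hu⟩ := exists_unitary_eq_mul_abs hz
  refine ⟨u, ?_⟩
  rw [CFC.abs, CFC.abs, star_star, ← unitary_conj_star_mul_self hu, CFC.sqrt_eq_rpow,
    CFC.sqrt_eq_rpow, unitary_conj_rpow (isStrictlyPositive_star_mul_self hz)]

theorem star_mul_self_rpow {z : A} (hz : IsUnit z) (t : ℝ) :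
    (star z * z) ^ t = star z * (z * star z) ^ (t - 1) * z := by
  have hpos := isStrictlyPositive_star_mul_self hz
  obtain ⟨u, hu⟩ := exists_unitary_eq_mul_abs hz
  have habs : star (u : A) * z = (star z * z) ^ (1 / 2 : ℝ) := by
    rw [← CFC.sqrt_eq_rpow, ← CFC.abs, eq_comm]
    conv_rhs => rw [hu, ← mul_assoc, Unitary.coe_star_mul_self, one_mul]
  have habs' : star z * u = (star z * z) ^ (1 / 2 : ℝ) := by
    rw [← (CFC.rpow_nonneg (a := star z * z)).isSelfAdjoint.star_eq, ← habs, star_mul, star_star]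
  calc (star z * z) ^ t
      = (star z * z) ^ (1 / 2 : ℝ) * (star z * z) ^ (t - 1) * (star z * z) ^ (1 / 2 : ℝ) := by
        rw [← CFC.rpow_add hpos.isUnit, ← CFC.rpow_add hpos.isUnit]; ring_nf
    _ = star z * (u * (star z * z) ^ (t - 1) * star (u : A)) * z := by
        nth_rewrite 1 [← habs']; rw [← habs]; simp only [mul_assoc]
    _ = star z * (z * star z) ^ (t - 1) * z := by
        rw [← unitary_conj_rpow hpos, unitary_conj_star_mul_self hu]

end PolarDecomposition

section Furuta

variable {A : Type*} [CStarAlgebra A] [PartialOrder A] [StarOrderedRing A] {b c : A}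

theorem rpow_conj_rpow (hb : IsStrictlyPositive b) (s t : ℝ) :
    b ^ s * b ^ t * b ^ s = b ^ (t + 2 * s) := by
  rw [← CFC.rpow_add hb.isUnit, ← CFC.rpow_add hb.isUnit]
  ring_nf

theorem rpow_neg_le_rpow_neg (hb : IsStrictlyPositive b) (hbc : b ≤ c) {t : ℝ}
    (ht : t ∈ Set.Icc 0 1) : c ^ (-t) ≤ b ^ (-t) := by
  have hc := hb.of_le hbc
  rcases ht.1.eq_or_lt with rfl | ht0
  · simp [CFC.rpow_zero b hb.nonneg, CFC.rpow_zero c hc.nonneg]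
  · have hinv := CStarAlgebra.rpow_neg_one_le_rpow_neg_one (CFC.rpow_le_rpow ht hbc) (hb.rpow b t)
    rwa [CFC.rpow_rpow _ _ _ ht0.ne' hb, CFC.rpow_rpow _ _ _ ht0.ne' hc, mul_neg_one] at hinv

theorem isStrictlyPositive_rpow_conj_rpow (hb : IsStrictlyPositive b) (hc : IsStrictlyPositive c)
    (s t : ℝ) : IsStrictlyPositive (c ^ s * b ^ t * c ^ s) :=
  (((hc.rpow c s).isUnit.mul (hb.rpow b t).isUnit).mul (hc.rpow c s).isUnit).isStrictlyPositive
    (conjugate_nonneg_of_nonneg CFC.rpow_nonneg CFC.rpow_nonneg)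

theorem furuta_of_le_one (hb : IsStrictlyPositive b) (hbc : b ≤ c) {p r : ℝ} (hp : 1 ≤ p)
    (hr0 : 0 ≤ r) (hr1 : r ≤ 1) :
    (c ^ (r / 2) * b ^ p * c ^ (r / 2)) ^ ((1 + r) / (p + r)) ≤ c ^ (1 + r) := by
  have hc := hb.of_le hbc
  have hpr : 0 < p + r := by linarith
  set z := b ^ (p / 2) * c ^ (r / 2) with hz
  have hzu : IsUnit z := (hb.rpow b _).isUnit.mul (hc.rpow c _).isUnit
  have hstar : star z = c ^ (r / 2) * b ^ (p / 2) := by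
    rw [hz, star_mul, (CFC.rpow_nonneg (a := b)).isSelfAdjoint.star_eq,
      (CFC.rpow_nonneg (a := c)).isSelfAdjoint.star_eq]
  have hconj (s : ℝ) : star z * b ^ s * z = c ^ (r / 2) * b ^ (s + p) * c ^ (r / 2) := by
    rw [hstar, hz, show s + p = s + 2 * (p / 2) by ring, ← rpow_conj_rpow hb]
    simp only [mul_assoc]
  have hle : b ^ (p + r) ≤ z * star z := calc
    b ^ (p + r) = b ^ (p / 2) * b ^ r * b ^ (p / 2) := by rw [rpow_conj_rpow hb]; ring_nf
    _ ≤ b ^ (p / 2) * c ^ r * b ^ (p / 2) :=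
      conjugate_le_conjugate_of_nonneg (CFC.rpow_le_rpow ⟨hr0, hr1⟩ hbc) CFC.rpow_nonneg
    _ = z * star z := by
      rw [hstar, hz, show r = r / 2 + r / 2 by ring, CFC.rpow_add hc.isUnit, add_halves]
      simp only [mul_assoc]
  have hanti : (z * star z) ^ (-((p - 1) / (p + r))) ≤ b ^ (1 - p) := by
    have h := rpow_neg_le_rpow_neg (hb.rpow b _) hle (t := (p - 1) / (p + r))
      ⟨div_nonneg (by linarith) hpr.le, (div_le_one hpr).2 (by linarith)⟩
    rwa [CFC.rpow_rpow _ _ _ hpr.ne' hb, mul_neg, mul_div_cancel₀ _ hpr.ne', neg_sub] at h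
  calc (c ^ (r / 2) * b ^ p * c ^ (r / 2)) ^ ((1 + r) / (p + r))
      = star z * (z * star z) ^ (-((p - 1) / (p + r))) * z := by
        rw [← zero_add p, ← hconj, CFC.rpow_zero b hb.nonneg, mul_one, star_mul_self_rpow hzu,
          zero_add]
        congr 3
        field_simp
        ring
    _ ≤ star z * b ^ (1 - p) * z := star_left_conjugate_le_conjugate hanti z
    _ = c ^ (r / 2) * b * c ^ (r / 2) := by rw [hconj, sub_add_cancel, CFC.rpow_one b hb.nonneg]
    _ ≤ c ^ (r / 2) * c * c ^ (r / 2) := conjugate_le_conjugate_of_nonneg hbc CFC.rpow_nonneg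
    _ = c ^ (1 + r) := by
      nth_rewrite 2 [← CFC.rpow_one c hc.nonneg]
      rw [rpow_conj_rpow hc]
      ring_nf

theorem furuta_double (hb : IsStrictlyPositive b) (hc : IsStrictlyPositive c) {p r : ℝ}
    (hp : 1 ≤ p) (hr : 0 ≤ r)
    (h : (c ^ (r / 2) * b ^ p * c ^ (r / 2)) ^ ((1 + r) / (p + r)) ≤ c ^ (1 + r)) :
    (c ^ r * b ^ p * c ^ r) ^ ((1 + 2 * r) / (p + 2 * r)) ≤ c ^ (1 + 2 * r) := by
  have hd := isStrictlyPositive_rpow_conj_rpow hb hc (r / 2) p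
  set d := c ^ (r / 2) * b ^ p * c ^ (r / 2) with hd_def
  have h1r : 0 < 1 + r := by linarith
  have : 0 < p + r := by linarith
  have : p + 2 * r ≠ 0 := by linarith
  -- The inequality for `r` is itself a hypothesis `d ^ _ ≤ c ^ (1 + r)` for the case `r ≤ 1`.
  have key := furuta_of_le_one (hd.rpow d ((1 + r) / (p + r))) h (p := (p + r) / (1 + r))
    (r := r / (1 + r)) ((one_le_div h1r).2 (by linarith)) (by positivity)
    ((div_le_one h1r).2 (by linarith))
  have hexp_cancel : (1 + r) / (p + r) * ((p + r) / (1 + r)) = 1 := by field_simp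
  have hexp_half : (1 + r) * (r / (1 + r) / 2) = r / 2 := by field_simp
  have hexp_right : (1 + r) * (1 + r / (1 + r)) = 1 + 2 * r := by
    field_simp
    ring
  have hexp_left : (1 + r / (1 + r)) / ((p + r) / (1 + r) + r / (1 + r)) =
      (1 + 2 * r) / (p + 2 * r) := by
    field_simp
    ring
  have hconj : c ^ (r / 2) * d * c ^ (r / 2) = c ^ r * b ^ p * c ^ r := by
    rw [hd_def, ← add_halves r, CFC.rpow_add hc.isUnit, add_halves]
    simp only [mul_assoc]
  rwa [CFC.rpow_rpow _ _ _ (by positivity) hd, CFC.rpow_rpow _ _ _ h1r.ne' hc,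
    CFC.rpow_rpow _ _ _ h1r.ne' hc, hexp_cancel, hexp_half, hexp_right, hexp_left,
    CFC.rpow_one d hd.nonneg, hconj] at key

theorem furuta (hb : IsStrictlyPositive b) (hbc : b ≤ c) {p r : ℝ} (hp : 1 ≤ p) (hr : 0 ≤ r) :
    (c ^ (r / 2) * b ^ p * c ^ (r / 2)) ^ ((1 + r) / (p + r)) ≤ c ^ (1 + r) := by
  obtain ⟨n, hn⟩ : ∃ n : ℕ, r ≤ 2 ^ n :=
    (pow_unbounded_of_one_lt r one_lt_two).imp fun _ => le_of_lt
  induction n generalizing r with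
  | zero => exact furuta_of_le_one hb hbc hp hr (by simpa using hn)
  | succ n ih =>
    have hhalf := ih (r := r / 2) (by linarith) (by rw [pow_succ] at hn; linarith)
    have hdouble := furuta_double hb (hb.of_le hbc) hp (by linarith) hhalf
    rwa [mul_div_cancel₀ r two_ne_zero] at hdouble

theorem furuta_rpow_le (hb : IsStrictlyPositive b) (hbc : b ≤ c) {p r θ : ℝ} (hp : 1 ≤ p)
    (hr : 0 ≤ r) (hθ : 0 ≤ θ) (hθ' : θ * (p + r) ≤ 1 + r) :
    (c ^ (r / 2) * b ^ p * c ^ (r / 2)) ^ θ ≤ c ^ (θ * (p + r)) := by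
  have hc := hb.of_le hbc
  have h1r : 0 < 1 + r := by linarith
  have : 0 < p + r := by linarith
  have hd := isStrictlyPositive_rpow_conj_rpow hb hc (r / 2) p
  have key := CFC.rpow_le_rpow (p := θ * (p + r) / (1 + r))
    ⟨by positivity, (div_le_one h1r).2 hθ'⟩ (furuta hb hbc hp hr)
  rw [CFC.rpow_rpow _ _ _ (by positivity) hd, CFC.rpow_rpow _ _ _ h1r.ne' hc] at key
  convert key using 2 <;> field_simp

theorem exists_unitary_abs_mul_mul_le {ρ σ : ℝ} {x z : A} (hb : IsStrictlyPositive b)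
    (hbc : b ≤ c) (hz : IsUnit z) (hxc : star x * x ≤ c ^ ρ) (hzb : z * star z ≤ b ^ σ)
    (hσ : 0 ≤ σ) (hσρ : σ ≤ ρ) :
    ∃ u : unitary A, CFC.abs (x * b * z) ≤ u * c ^ (1 + (σ + ρ) / 2) * star (u : A) := by
  have hc := hb.of_le hbc
  set w := c ^ (ρ / 2) * b * z with hw
  have hwu : IsUnit w := ((hc.rpow c _).isUnit.mul hb.isUnit).mul hz
  have hstar : star w = star z * b * c ^ (ρ / 2) := by
    rw [hw, star_mul, star_mul, (CFC.rpow_nonneg (a := c)).isSelfAdjoint.star_eq,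
      hb.isSelfAdjoint.star_eq, mul_assoc]
  have habs : CFC.abs (x * b * z) ≤ CFC.abs w := by
    refine CFC.sqrt_le_sqrt _ _ ?_
    calc star (x * b * z) * (x * b * z) = star (b * z) * (star x * x) * (b * z) := by
          simp only [star_mul, mul_assoc]
      _ ≤ star (b * z) * c ^ ρ * (b * z) := star_left_conjugate_le_conjugate hxc _
      _ = star w * w := by
          rw [hstar, hw, ← add_halves ρ, CFC.rpow_add hc.isUnit, add_halves, star_mul,
            hb.isSelfAdjoint.star_eq]
          simp only [mul_assoc]
  have habs_star : CFC.abs (star w) ≤ c ^ (1 + (σ + ρ) / 2) := by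
    have hsq : w * star w ≤ c ^ (ρ / 2) * b ^ (σ + 2) * c ^ (ρ / 2) := calc
      w * star w = c ^ (ρ / 2) * (b * (z * star z) * b) * c ^ (ρ / 2) := by
        rw [hstar, hw]; simp only [mul_assoc]
      _ ≤ c ^ (ρ / 2) * (b * b ^ σ * b) * c ^ (ρ / 2) :=
        conjugate_le_conjugate_of_nonneg (conjugate_le_conjugate_of_nonneg hzb hb.nonneg)
          CFC.rpow_nonneg
      _ = c ^ (ρ / 2) * b ^ (σ + 2) * c ^ (ρ / 2) := by
        have := rpow_conj_rpow hb 1 σ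
        rw [CFC.rpow_one b hb.nonneg, mul_one] at this
        rw [this]
    calc CFC.abs (star w) ≤ (c ^ (ρ / 2) * b ^ (σ + 2) * c ^ (ρ / 2)) ^ (1 / 2 : ℝ) := by
          rw [CFC.abs, star_star, ← CFC.sqrt_eq_rpow]
          exact CFC.sqrt_le_sqrt _ _ hsq
      _ ≤ c ^ (1 / 2 * (σ + 2 + ρ)) :=
          furuta_rpow_le hb hbc (by linarith) (by linarith) (by norm_num) (by linarith)
      _ = c ^ (1 + (σ + ρ) / 2) := by ring_nf
  obtain ⟨u, hu⟩ := exists_unitary_abs_star_eq_conj_abs hwu.star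
  rw [star_star] at hu
  exact ⟨u, habs.trans (hu.trans_le (star_right_conjugate_le_conjugate habs_star _))⟩

end Furuta

section BernsteinPartition

open Polynomial

theorem sum_div_smul_bernsteinPolynomial {n : ℕ} (hn : n ≠ 0) :
    ∑ k ∈ Finset.range (n + 1), ((k : ℝ) / n) • bernsteinPolynomial ℝ n k = X := by
  have hn' : (n : ℝ) ≠ 0 := Nat.cast_ne_zero.2 hn
  have hsum := congrArg ((n : ℝ)⁻¹ • ·) (bernsteinPolynomial.sum_smul ℝ n)
  simp only [← Nat.cast_smul_eq_nsmul ℝ, Finset.smul_sum, smul_smul, inv_mul_cancel₀ hn',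
    one_smul] at hsum
  simpa only [div_eq_inv_mul] using hsum

theorem sum_div_sq_smul_bernsteinPolynomial {n : ℕ} (hn : n ≠ 0) :
    ∑ k ∈ Finset.range (n + 1), ((k : ℝ) / n) ^ 2 • bernsteinPolynomial ℝ n k =
      X ^ 2 + (n : ℝ)⁻¹ • (X - X ^ 2) := by
  have hn' : (n : ℝ) ≠ 0 := Nat.cast_ne_zero.2 hn
  have hfactorial := congrArg (((n : ℝ) ^ 2)⁻¹ • ·) (bernsteinPolynomial.sum_mul_smul ℝ n)
  have hcast (m : ℕ) : ((m * (m - 1) : ℕ) : ℝ) = m * (m - 1) := by cases m <;> simp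
  simp only [← Nat.cast_smul_eq_nsmul ℝ, hcast, Finset.smul_sum, smul_smul] at hfactorial
  have hsplit (k : ℕ) : ((k : ℝ) / n) ^ 2 =
      ((n : ℝ) ^ 2)⁻¹ * (k * (k - 1)) + (n : ℝ)⁻¹ * (k / n) := by
    field_simp
    ring
  simp only [hsplit, add_smul, Finset.sum_add_distrib, hfactorial]
  simp only [mul_smul _ _ (bernsteinPolynomial _ _ _), ← Finset.smul_sum,
    sum_div_smul_bernsteinPolynomial hn]
  rw [show ((n : ℝ) ^ 2)⁻¹ * (n * (n - 1)) = 1 - (n : ℝ)⁻¹ by field_simp]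
  module

variable {A : Type*} [CStarAlgebra A] [PartialOrder A] [StarOrderedRing A]

theorem aeval_bernsteinPolynomial_nonneg {a : A} (h0 : 0 ≤ a) (h1 : a ≤ 1) (n k : ℕ) :
    0 ≤ aeval a (bernsteinPolynomial ℝ n k) := by
  have hcomm : Commute a (1 - a) := (Commute.one_right a).sub_right (Commute.refl a)
  have hprod : 0 ≤ a ^ k * (1 - a) ^ (n - k) :=
    (hcomm.pow_pow k (n - k)).mul_nonneg (CStarAlgebra.pow_nonneg h0 k)
      (CStarAlgebra.pow_nonneg (sub_nonneg.2 h1) (n - k))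
  simpa [bernsteinPolynomial, mul_assoc, ← nsmul_eq_mul] using nsmul_nonneg hprod (n.choose k)

end BernsteinPartition

section CauchySchwarz

open Filter Topology

variable {A B : Type*} [CStarAlgebra A] [PartialOrder A] [StarOrderedRing A]
  [CStarAlgebra B] [PartialOrder B] [StarOrderedRing B] (Φ : A →ₚ[ℂ] B)

theorem star_mul_sum_add_sum_mul_le {ι : Type*} (s : Finset ι) {E : ι → B}
    (hE : ∀ i ∈ s, 0 ≤ E i) (l : ι → ℝ) (y : B) :
    star y * (∑ i ∈ s, l i • E i) + (∑ i ∈ s, l i • E i) * y ≤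
      ∑ i ∈ s, l i ^ 2 • E i + star y * (∑ i ∈ s, E i) * y := by
  have hnonneg : 0 ≤ ∑ i ∈ s, star (l i • 1 - y) * E i * (l i • 1 - y) :=
    Finset.sum_nonneg fun i hi => star_left_conjugate_nonneg (hE i hi) _
  have hexpand (i : ι) : star (l i • 1 - y) * E i * (l i • 1 - y) =
      (l i ^ 2 • E i + star y * E i * y) - (star y * (l i • E i) + (l i • E i) * y) := by
    simp only [star_sub, star_smul, star_one, star_trivial, sub_mul, mul_sub, smul_mul_assoc,
      mul_smul_comm, one_mul, mul_one]
    module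
  simp only [hexpand, Finset.sum_sub_distrib, Finset.sum_add_distrib, ← Finset.mul_sum,
    ← Finset.sum_mul] at hnonneg
  exact sub_nonneg.1 hnonneg

theorem positive_map_cauchy_schwarz_of_le_one {a : A} (h0 : 0 ≤ a) (h1 : a ≤ 1) (y : B) :
    star y * Φ a + Φ a * y ≤ Φ (a ^ 2) + star y * Φ 1 * y := by
  have happrox (n : ℕ) : star y * Φ a + Φ a * y ≤
      Φ (a ^ 2) + ((n + 1 : ℕ) : ℝ)⁻¹ • Φ (a - a ^ 2) + star y * Φ 1 * y := by
    have hmoment0 := congrArg (Φ ∘ Polynomial.aeval a) (bernsteinPolynomial.sum ℝ (n + 1))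
    have hmoment1 := congrArg (Φ ∘ Polynomial.aeval a)
      (sum_div_smul_bernsteinPolynomial n.succ_ne_zero)
    have hmoment2 := congrArg (Φ ∘ Polynomial.aeval a)
      (sum_div_sq_smul_bernsteinPolynomial n.succ_ne_zero)
    simp only [Function.comp_apply, map_sum, map_smul, PositiveLinearMap.map_smul_of_tower,
      map_add, map_sub, map_one, map_pow, Polynomial.aeval_X] at hmoment0 hmoment1 hmoment2
    have hsum := star_mul_sum_add_sum_mul_le (Finset.range (n + 1 + 1))
      (fun k _ => map_nonneg Φ (aeval_bernsteinPolynomial_nonneg h0 h1 (n + 1) k))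
      (fun k => (k : ℝ) / (n + 1 : ℕ)) y
    rw [map_sub]
    rwa [hmoment0, hmoment1, hmoment2] at hsum
  have hinv : Tendsto (fun n : ℕ => ((n + 1 : ℕ) : ℝ)⁻¹) atTop (𝓝 0) :=
    (tendsto_inv_atTop_nhds_zero_nat (𝕜 := ℝ)).comp (tendsto_add_atTop_nat 1)
  have hlim := ((hinv.smul_const (Φ (a - a ^ 2))).const_add (Φ (a ^ 2))).add_const
    (star y * Φ 1 * y)
  rw [zero_smul, add_zero] at hlim
  exact ge_of_tendsto' hlim happrox

theorem positive_map_cauchy_schwarz {a : A} (ha : 0 ≤ a) (y : B) :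
    star y * Φ a + Φ a * y ≤ Φ (a ^ 2) + star y * Φ 1 * y := by
  set M : ℝ := ‖a‖ + 1
  have hM0 : 0 < M := by positivity
  have hnonneg : 0 ≤ M⁻¹ • a := smul_nonneg (inv_nonneg.2 hM0.le) ha
  have hle : M⁻¹ • a ≤ 1 := by
    rw [← CStarAlgebra.norm_le_one_iff_of_nonneg _ hnonneg, norm_smul, norm_inv,
      Real.norm_of_nonneg hM0.le, inv_mul_le_one₀ hM0]
    exact (lt_add_one _).le
  have hscaled := smul_le_smul_of_nonneg_left (positive_map_cauchy_schwarz_of_le_one Φ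
    hnonneg hle (M⁻¹ • y)) (sq_nonneg M)
  simpa [smul_pow, smul_smul, mul_assoc, ← mul_smul, smul_add, pow_two, hM0.ne'] using hscaled

end CauchySchwarz

section Jensen

open Set

theorem Icc_subset_of_isClosed_of_add_div_two_mem {S : Set ℝ} (hS : IsClosed S)
    (hmid : ∀ x ∈ S, ∀ y ∈ S, (x + y) / 2 ∈ S) {x y : ℝ} (hx : x ∈ S) (hy : y ∈ S) :
    Icc x y ⊆ S := by
  intro t ht
  have hlower : sSup (S ∩ Iic t) ∈ S ∩ Iic t :=
    (hS.inter isClosed_Iic).csSup_mem ⟨x, hx, ht.1⟩ ⟨t, fun _ h => h.2⟩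
  have hupper : sInf (S ∩ Ici t) ∈ S ∩ Ici t :=
    (hS.inter isClosed_Ici).csInf_mem ⟨y, hy, ht.2⟩ ⟨t, fun _ h => h.2⟩
  -- The points of `S` nearest to `t` on either side coincide, as their midpoint is not nearer.
  have hmem := hmid _ hlower.1 _ hupper.1
  have hle : sSup (S ∩ Iic t) ≤ t := hlower.2
  have hge : t ≤ sInf (S ∩ Ici t) := hupper.2
  rcases le_total ((sSup (S ∩ Iic t) + sInf (S ∩ Ici t)) / 2) t with h | h
  · have := le_csSup (s := S ∩ Iic t) ⟨t, fun _ h => h.2⟩ ⟨hmem, h⟩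
    exact (le_antisymm (by linarith) hle : t = sSup (S ∩ Iic t)) ▸ hlower.1
  · have := csInf_le (s := S ∩ Ici t) ⟨t, fun _ h => h.2⟩ ⟨hmem, h⟩
    exact (le_antisymm hge (by linarith) : t = sInf (S ∩ Ici t)) ▸ hupper.1

variable {A B : Type*} [CStarAlgebra A] [PartialOrder A] [StarOrderedRing A]
  [CStarAlgebra B] [PartialOrder B] [StarOrderedRing B] (Φ : A →ₚ[ℂ] B)

theorem continuous_rpow_exponent {a : A} (ha : IsStrictlyPositive a) :
    Continuous fun t : ℝ => a ^ t := by
  have hexp (t : ℝ) : a ^ t = NormedSpace.exp (t • CFC.log a) := by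
    have hlog : ContinuousOn Real.log (spectrum ℝ a) := fun x hx =>
      (Real.continuousAt_log (ha.spectrum_pos hx).ne').continuousWithinAt
    rw [← CFC.real_exp_eq_normedSpace_exp, CFC.log, ← cfc_smul t Real.log a hlog,
      ← cfc_comp' Real.exp (fun x => t • Real.log x) a, CFC.rpow_eq_cfc_real (ha := ha.nonneg)]
    refine cfc_congr fun x hx => ?_
    rw [Real.rpow_def_of_pos (ha.spectrum_pos hx), smul_eq_mul, mul_comm]
  simp only [hexp]
  let := NormedAlgebra.restrictScalars ℚ ℝ A
  exact NormedSpace.exp_continuous.comp (by fun_prop)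

theorem positive_map_cauchy_schwarz_conj {a : A} (ha : 0 ≤ a) (k : A) (y : B) :
    star y * Φ (star k * a * k) + Φ (star k * a * k) * y ≤
      Φ (star k * a ^ 2 * k) + star y * Φ (star k * k) * y := by
  let conj : A →ₚ[ℂ] A := .mk₀ (LinearMap.mulLeftRight ℂ (star k, k))
    fun _ hx => star_left_conjugate_nonneg hx k
  have h := positive_map_cauchy_schwarz (Φ.comp conj) ha y
  change star y * Φ (star k * a * k) + Φ (star k * a * k) * y ≤
    Φ (star k * a ^ 2 * k) + star y * Φ (star k * 1 * k) * y at h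
  rwa [mul_one] at h

theorem positive_map_rpow_cauchy_schwarz {a : A} (ha : IsStrictlyPositive a) (s t : ℝ) (y : B) :
    star y * Φ (a ^ ((s + t) / 2)) + Φ (a ^ ((s + t) / 2)) * y ≤
      Φ (a ^ t) + star y * Φ (a ^ s) * y := by
  have h := positive_map_cauchy_schwarz_conj Φ (CFC.rpow_nonneg (a := a) (y := (t - s) / 2))
    (a ^ (s / 2)) y
  rw [(CFC.rpow_nonneg (a := a)).isSelfAdjoint.star_eq, pow_two] at h
  simp only [← CFC.rpow_add ha.isUnit] at h
  ring_nf at h ⊢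
  exact h

theorem map_mul_map_le_map_sq (hΦ : Φ 1 = 1) {a : A} (ha : 0 ≤ a) : Φ a * Φ a ≤ Φ (a ^ 2) := by
  have h := positive_map_cauchy_schwarz Φ ha (Φ a)
  rwa [(map_nonneg Φ ha).isSelfAdjoint.star_eq, hΦ, mul_one, add_le_add_iff_right] at h

theorem le_rpow_of_mul_rpow_neg_mul_le {c x : B} (hc : IsStrictlyPositive c) (hx : 0 ≤ x)
    {s t : ℝ} (h : x * c ^ (-s) * x ≤ c ^ t) : x ≤ c ^ ((s + t) / 2) := by
  set y := c ^ (-s / 2) * x * c ^ (-s / 2) with hy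
  have hy0 : 0 ≤ y := conjugate_nonneg_of_nonneg hx CFC.rpow_nonneg
  have hsq : y * y ≤ c ^ (t - s) := calc
    y * y = c ^ (-s / 2) * (x * c ^ (-s) * x) * c ^ (-s / 2) := by
      rw [hy, ← add_halves (-s), CFC.rpow_add hc.isUnit, add_halves]
      simp only [mul_assoc]
    _ ≤ c ^ (-s / 2) * c ^ t * c ^ (-s / 2) := conjugate_le_conjugate_of_nonneg h CFC.rpow_nonneg
    _ = c ^ (t - s) := by rw [rpow_conj_rpow hc]; ring_nf
  have hroot : y ≤ c ^ ((t - s) / 2) := calc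
    y = CFC.sqrt (y * y) := (CFC.sqrt_mul_self y).symm
    _ ≤ CFC.sqrt (c ^ (t - s)) := CFC.sqrt_le_sqrt _ _ hsq
    _ = c ^ ((t - s) / 2) := by
      rw [sub_div, CFC.sqrt_eq_iff _ _ CFC.rpow_nonneg CFC.rpow_nonneg, ← CFC.rpow_add hc.isUnit]
      ring_nf
  calc x = c ^ (s / 2) * y * c ^ (s / 2) := by
        have hcancel : c ^ (s / 2) * c ^ (-s / 2) = 1 := by
          rw [neg_div, CFC.rpow_mul_rpow_neg]
        have hcancel' : c ^ (-s / 2) * c ^ (s / 2) = 1 := by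
          rw [neg_div, CFC.rpow_neg_mul_rpow]
        calc x = (c ^ (s / 2) * c ^ (-s / 2)) * x * (c ^ (-s / 2) * c ^ (s / 2)) := by
              rw [hcancel, hcancel', one_mul, mul_one]
          _ = c ^ (s / 2) * y * c ^ (s / 2) := by rw [hy]; simp only [mul_assoc]
    _ ≤ c ^ (s / 2) * c ^ ((t - s) / 2) * c ^ (s / 2) :=
      conjugate_le_conjugate_of_nonneg hroot CFC.rpow_nonneg
    _ = c ^ ((s + t) / 2) := by rw [rpow_conj_rpow hc]; ring_nf

theorem isStrictlyPositive_map (hΦ : Φ 1 = 1) {a : A} (ha : IsStrictlyPositive a) :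
    IsStrictlyPositive (Φ a) := by
  rcases subsingleton_or_nontrivial A with hA | hA
  · rw [Subsingleton.elim a 1, hΦ]
    exact isStrictlyPositive_one
  · obtain ⟨r, hr, hra⟩ := (CFC.exists_pos_algebraMap_le_iff ha.isSelfAdjoint).2
      fun _ hx => ha.spectrum_pos hx
    have hle : algebraMap ℝ B r ≤ Φ a := calc
      algebraMap ℝ B r = Φ (algebraMap ℝ A r) := by
        simp only [Algebra.algebraMap_eq_smul_one, PositiveLinearMap.map_smul_of_tower, hΦ]
      _ ≤ Φ a := OrderHomClass.mono Φ hra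
    exact (isStrictlyPositive_algebraMap hr).of_le hle

theorem map_rpow_add_div_two_le_rpow {a : A} {c : B} (ha : IsStrictlyPositive a)
    (hc : IsStrictlyPositive c) {s t : ℝ} (hs : Φ (a ^ s) ≤ c ^ s) (ht : Φ (a ^ t) ≤ c ^ t) :
    Φ (a ^ ((s + t) / 2)) ≤ c ^ ((s + t) / 2) := by
  have hM : 0 ≤ Φ (a ^ ((s + t) / 2)) := map_nonneg Φ CFC.rpow_nonneg
  refine le_rpow_of_mul_rpow_neg_mul_le hc hM ?_
  set M := Φ (a ^ ((s + t) / 2))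
  set y := c ^ (-s) * M with hy
  have hystar : star y = M * c ^ (-s) := by
    rw [hy, star_mul, hM.isSelfAdjoint.star_eq, (CFC.rpow_nonneg (a := c)).isSelfAdjoint.star_eq]
  have hcs : M * c ^ (-s) * M + M * c ^ (-s) * M ≤ c ^ t + M * c ^ (-s) * M := calc
    M * c ^ (-s) * M + M * c ^ (-s) * M = star y * M + M * y := by rw [hystar, hy, ← mul_assoc]
    _ ≤ Φ (a ^ t) + star y * Φ (a ^ s) * y := positive_map_rpow_cauchy_schwarz Φ ha s t y
    _ ≤ c ^ t + star y * c ^ s * y := add_le_add ht (star_left_conjugate_le_conjugate hs y)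
    _ = c ^ t + M * c ^ (-s) * M := by
      rw [hystar, hy, mul_assoc M, CFC.rpow_neg_mul_rpow, mul_one, ← mul_assoc]
  exact (add_le_add_iff_right _).1 hcs

theorem map_rpow_le_rpow_map (hΦ : Φ 1 = 1) {a : A} (ha : IsStrictlyPositive a) {t : ℝ}
    (ht : t ∈ Icc 0 1) : Φ (a ^ t) ≤ Φ a ^ t := by
  have hc := isStrictlyPositive_map Φ hΦ ha
  have hclosed : IsClosed {t : ℝ | Φ (a ^ t) ≤ Φ a ^ t} :=
    isClosed_le ((map_continuous Φ).comp (continuous_rpow_exponent ha))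
      (continuous_rpow_exponent hc)
  have h0 : Φ (a ^ (0 : ℝ)) ≤ Φ a ^ (0 : ℝ) := by
    rw [CFC.rpow_zero a ha.nonneg, CFC.rpow_zero _ hc.nonneg, hΦ]
  have h1 : Φ (a ^ (1 : ℝ)) ≤ Φ a ^ (1 : ℝ) := by
    rw [CFC.rpow_one a ha.nonneg, CFC.rpow_one _ hc.nonneg]
  exact Icc_subset_of_isClosed_of_add_div_two_mem hclosed
    (fun _ hs _ ht => map_rpow_add_div_two_le_rpow Φ ha hc hs ht) h0 h1 ht

theorem map_rpow_le_map_rpow_rpow (hΦ : Φ 1 = 1) {a : A} (ha : IsStrictlyPositive a) {u s : ℝ}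
    (hu : 0 ≤ u) (hus : u ≤ s) (hs : 0 < s) : Φ (a ^ u) ≤ Φ (a ^ s) ^ (u / s) := by
  have h := map_rpow_le_rpow_map Φ hΦ (ha.rpow a s) (t := u / s)
    ⟨by positivity, (div_le_one hs).2 hus⟩
  rwa [CFC.rpow_rpow _ _ _ hs.ne' ha, mul_div_cancel₀ _ hs.ne'] at h

theorem map_rpow_mul_self_le_map_rpow_rpow (hΦ : Φ 1 = 1) {a : A} (ha : IsStrictlyPositive a)
    {u s : ℝ} (hu : 0 ≤ u) (hus : 2 * u ≤ s) (hs : 0 < s) :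
    Φ (a ^ u) * Φ (a ^ u) ≤ Φ (a ^ s) ^ (2 * u / s) := calc
  Φ (a ^ u) * Φ (a ^ u) ≤ Φ ((a ^ u) ^ 2) := map_mul_map_le_map_sq Φ hΦ CFC.rpow_nonneg
  _ = Φ (a ^ (2 * u)) := by rw [pow_two, ← CFC.rpow_add ha.isUnit, two_mul]
  _ ≤ Φ (a ^ s) ^ (2 * u / s) := map_rpow_le_map_rpow_rpow Φ hΦ ha (by positivity) hus hs

end Jensen

section TripleProduct

open Filter Topology

theorem isCompact_unitary {B : Type*} [NormedRing B] [StarRing B] [CStarRing B] [ProperSpace B] :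
    IsCompact (unitary B : Set B) := by
  refine (isCompact_closedBall (0 : B) 1).of_isClosed_subset isClosed_unitary fun u hu => ?_
  rw [mem_closedBall_zero_iff]
  nontriviality B
  exact (CStarRing.norm_of_mem_unitary hu).le

variable {A B : Type*} [CStarAlgebra A] [PartialOrder A] [StarOrderedRing A]
  [CStarAlgebra B] [PartialOrder B] [StarOrderedRing B] (Φ : A →ₚ[ℂ] B) {a : A} {p q r : ℝ}

theorem star_map_rpow (t : ℝ) : star (Φ (a ^ t)) = Φ (a ^ t) :=
  (map_nonneg Φ CFC.rpow_nonneg).isSelfAdjoint.star_eq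

theorem exists_unitary_abs_map_rpow_le_of_le (hΦ : Φ 1 = 1) (ha : IsStrictlyPositive a)
    (hq : 0 < q) (hr : 0 ≤ r) (hrp : r ≤ p) (hrq : 2 * r ≤ q) (hpq : p ≤ q) :
    ∃ u : unitary B, CFC.abs (Φ (a ^ p) * Φ (a ^ q) * Φ (a ^ r)) ≤
      u * Φ (a ^ (p + q + r)) * star (u : B) := by
  have hs : 0 < p + q + r := by linarith
  have hpos (t : ℝ) : IsStrictlyPositive (Φ (a ^ t)) := isStrictlyPositive_map Φ hΦ (ha.rpow a t)
  have hpow : (Φ (a ^ (p + q + r)) ^ (q / (p + q + r))) ^ (2 * p / q) =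
      Φ (a ^ (p + q + r)) ^ (2 * p / (p + q + r)) := by
    rw [CFC.rpow_rpow _ _ _ (div_pos hq hs).ne' (hpos _)]
    congr 1
    field_simp
  obtain ⟨u, hu⟩ := exists_unitary_abs_mul_mul_le (x := Φ (a ^ p)) (z := Φ (a ^ r))
    (ρ := 2 * p / q) (σ := 2 * r / q) (hpos q)
    (map_rpow_le_map_rpow_rpow Φ hΦ ha hq.le (by linarith : q ≤ p + q + r) hs) (hpos r).isUnit
    (by
      rw [star_map_rpow, hpow]
      exact map_rpow_mul_self_le_map_rpow_rpow Φ hΦ ha (hr.trans hrp) (by linarith) hs)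
    (by
      rw [star_map_rpow]
      exact map_rpow_mul_self_le_map_rpow_rpow Φ hΦ ha hr hrq hq)
    (by positivity) (by gcongr)
  have hexp : q / (p + q + r) * (1 + (2 * r / q + 2 * p / q) / 2) = 1 := by
    field_simp
    ring
  rw [CFC.rpow_rpow_of_exponent_nonneg _ _ _ (div_pos hq hs).le
    (by have := hr.trans hrp; positivity) (hpos _).nonneg, hexp,
    CFC.rpow_one _ (hpos _).nonneg] at hu
  exact ⟨u, hu⟩

theorem exists_unitary_abs_map_rpow_le (hΦ : Φ 1 = 1) (ha : IsStrictlyPositive a)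
    (hp : 0 ≤ p) (hr : 0 ≤ r) (hmin : min p r ≤ q / 2) (hmax : max p r ≤ q) :
    ∃ u : unitary B, CFC.abs (Φ (a ^ p) * Φ (a ^ q) * Φ (a ^ r)) ≤
      u * Φ (a ^ (p + q + r)) * star (u : B) := by
  obtain ⟨hpq, hrq⟩ := max_le_iff.mp hmax
  rcases (hp.trans hpq).eq_or_lt with rfl | hq
  · obtain rfl := le_antisymm hpq hp
    obtain rfl := le_antisymm hrq hr
    exact ⟨1, by simp [CFC.rpow_zero a ha.nonneg, hΦ]⟩
  rcases le_total r p with hrp | hpr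
  · rw [min_eq_right hrp] at hmin
    exact exists_unitary_abs_map_rpow_le_of_le Φ hΦ ha hq hr hrp (by linarith) hpq
  · rw [min_eq_left hpr] at hmin
    have hunit (t : ℝ) : IsUnit (Φ (a ^ t)) :=
      (isStrictlyPositive_map Φ hΦ (ha.rpow a t)).isUnit
    obtain ⟨u, hu⟩ :=
      exists_unitary_abs_map_rpow_le_of_le Φ hΦ ha hq hp hpr (by linarith) hrq
    obtain ⟨v, hv⟩ := exists_unitary_abs_star_eq_conj_abs
      (((hunit r).mul (hunit q)).mul (hunit p))
    refine ⟨v * u, ?_⟩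
    have hle := star_right_conjugate_le_conjugate hu (v : B)
    rw [← hv] at hle
    simpa only [star_mul, star_map_rpow, Submonoid.coe_mul, mul_assoc, add_comm, add_left_comm]
      using hle

theorem tendsto_add_algebraMap_rpow (ha : 0 ≤ a) {t : ℝ} (ht : 0 ≤ t) :
    Tendsto (fun k : ℕ => (a + algebraMap ℝ A (1 / ((k : ℝ) + 1))) ^ t) atTop (𝓝 (a ^ t)) := by
  have hadd (k : ℕ) : 0 ≤ a + algebraMap ℝ A (1 / ((k : ℝ) + 1)) :=
    add_nonneg ha (algebraMap_nonneg A (by positivity))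
  have hlim : Tendsto (fun k : ℕ => a + algebraMap ℝ A (1 / ((k : ℝ) + 1))) atTop (𝓝 a) := by
    simpa using ((continuous_algebraMap ℝ A).tendsto 0).comp
      tendsto_one_div_add_atTop_nhds_zero_nat |>.const_add a
  rcases ht.eq_or_lt with rfl | ht
  · simp only [CFC.rpow_zero _ ha, CFC.rpow_zero _ (hadd _), tendsto_const_nhds]
  · lift t to NNReal using ht.le
    simp only [← CFC.nnrpow_eq_rpow (NNReal.coe_pos.mp ht)]
    exact (CFC.continuousOn_nnrpow t a ha).tendsto.comp
      (tendsto_nhdsWithin_iff.mpr ⟨hlim, .of_forall hadd⟩)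

theorem exists_unitary_le_of_tendsto [ProperSpace B] {x y : ℕ → B} {x₀ y₀ : B}
    (hx : Tendsto x atTop (𝓝 x₀)) (hy : Tendsto y atTop (𝓝 y₀))
    (h : ∀ k, ∃ u : unitary B, x k ≤ u * y k * star (u : B)) :
    ∃ u : unitary B, x₀ ≤ u * y₀ * star (u : B) := by
  choose u hu using h
  obtain ⟨v, hv, φ, hφ, hlim⟩ := isCompact_unitary.tendsto_subseq fun k => (u k).2
  exact ⟨⟨v, hv⟩, le_of_tendsto_of_tendsto' (hx.comp hφ.tendsto_atTop)
    ((hlim.mul (hy.comp hφ.tendsto_atTop)).mul hlim.star) fun k => hu (φ k)⟩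

theorem triple_product_unitary_general [ProperSpace B] (hΦ : Φ 1 = 1) (ha : 0 ≤ a)
    (hp : 0 ≤ p) (hr : 0 ≤ r) (hmin : min p r ≤ q / 2) (hmax : max p r ≤ q) :
    ∃ u : unitary B, CFC.abs (Φ (a ^ p) * Φ (a ^ q) * Φ (a ^ r)) ≤
      u * Φ (a ^ (p + q + r)) * star (u : B) := by
  have hq : 0 ≤ q := (hp.trans (le_max_left p r)).trans hmax
  have hlim {t : ℝ} (ht : 0 ≤ t) := ((map_continuous Φ).tendsto (a ^ t)).comp
    (tendsto_add_algebraMap_rpow ha ht)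
  refine exists_unitary_le_of_tendsto
    ((CFC.continuous_abs.tendsto _).comp (((hlim hp).mul (hlim hq)).mul (hlim hr)))
    (hlim (by positivity)) fun k => ?_
  exact exists_unitary_abs_map_rpow_le Φ hΦ
    ((isStrictlyPositive_algebraMap (by positivity)).nonneg_add ha) hp hr hmin hmax

end TripleProduct

section MatrixAlgebra

open scoped MatrixOrder Matrix.Norms.L2Operator

variable {n : ℕ}

theorem mpow_eq_rpow {A : Matrix (Fin n) (Fin n) ℂ} (hA : A.PosSemidef) (t : ℝ) :
    mpow A t = A ^ t :=
  (CFC.rpow_eq_cfc_real (ha := hA.nonneg)).symm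

theorem matAbs_eq_abs (X : Matrix (Fin n) (Fin n) ℂ) : matAbs X = CFC.abs X :=
  (CFC.sqrt_eq_real_sqrt _ (star_mul_self_nonneg X) |>.trans cfcₙ_eq_cfc).symm

end MatrixAlgebra

/-- For a unital positive linear map `Φ`, `A ≥ 0` and `p, q, r ≥ 0` with `min{p,r} ≤ q/2` and
`max{p,r} ≤ q`, there is a unitary `V` with `|Φ(A^p) Φ(A^q) Φ(A^r)| ≤ V Φ(A^{p+q+r}) V*`. -/
theorem triple_product_unitary {n d : ℕ}
    (Φ : Matrix (Fin n) (Fin n) ℂ →ₗ[ℂ] Matrix (Fin d) (Fin d) ℂ)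
    (hΦ1 : Φ 1 = 1) (hΦpos : ∀ X : Matrix (Fin n) (Fin n) ℂ, X.PosSemidef → (Φ X).PosSemidef)
    (A : Matrix (Fin n) (Fin n) ℂ) (hA : A.PosSemidef)
    (p q r : ℝ) (hp : 0 ≤ p) (hq : 0 ≤ q) (hr : 0 ≤ r)
    (hmin : min p r ≤ q / 2) (hmax : max p r ≤ q) :
    ∃ V : Matrix (Fin d) (Fin d) ℂ, V ∈ Matrix.unitaryGroup (Fin d) ℂ ∧
      loewnerLE (matAbs (Φ (mpow A p) * Φ (mpow A q) * Φ (mpow A r)))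
        (V * Φ (mpow A (p + q + r)) * Vᴴ) := by
  open scoped MatrixOrder Matrix.Norms.L2Operator in
  have : ProperSpace (Matrix (Fin d) (Fin d) ℂ) := FiniteDimensional.proper ℂ _
  let Ψ := PositiveLinearMap.mk₀ Φ fun X hX =>
    (hΦpos X (Matrix.nonneg_iff_posSemidef.mp hX)).nonneg
  obtain ⟨V, hV⟩ := triple_product_unitary_general Ψ hΦ1 hA.nonneg hp hr hmin hmax
  simp only [mpow_eq_rpow hA, matAbs_eq_abs]
  exact ⟨V, V.2, Matrix.le_iff.mp hV⟩
end

section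
/- Let (A,B) be a monotone pair in Mₙ(ℂ) and Φ : Mₙ(ℂ) → M_d(ℂ) a sub-unital positive linear map (Φ(I) ≤ I). Then there exists a unitary V ∈ M_d(ℂ) with Φ(A)Φ(B)Φ(A) ≤ V Φ(ABA) V*. -/
open scoped Matrix ComplexOrder

/-- `(A, B)` is a monotone pair: `A = f(C)`, `B = g(C)` for some positive semidefinite `C` and
nonnegative nondecreasing functions `f`, `g` on `[0, ∞)`. -/
def MonotonePair {n : ℕ} (A B : Matrix (Fin n) (Fin n) ℂ) : Prop :=
  ∃ (C : Matrix (Fin n) (Fin n) ℂ) (f g : ℝ → ℝ), C.PosSemidef ∧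
    MonotoneOn f (Set.Ici 0) ∧ MonotoneOn g (Set.Ici 0) ∧
    (∀ x ∈ Set.Ici (0 : ℝ), 0 ≤ f x) ∧ (∀ x ∈ Set.Ici (0 : ℝ), 0 ≤ g x) ∧
    A = cfc f C ∧ B = cfc g C

/-!
For every vector `v`, the positive functional `X ↦ ⟪Φ(X)v, v⟫` turns the continuous functional
calculus of `C` into integration against a positive measure, so Chebyshev's integral inequality,
used for `(f, g)` and then for `(f, g f)`, gives
`⟪Φ(A)v, v⟫² ⟪Φ(B)v, v⟫ ≤ ‖v‖⁴ ⟪Φ(ABA)v, v⟫`.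

Write `P = Φ(A)`, `Q = Φ(B)`, `R = Φ(ABA)`, and let `μₖ`, `νₖ` be the `k`-th largest eigenvalues of
`PQP` and `R`. A dimension count as in the Courant–Fischer theorem gives `v ≠ 0` with
`μₖ ‖v‖² ≤ ⟪PQPv, v⟫ = ⟪QPv, Pv⟫` and `⟪RPv, Pv⟫ ≤ νₖ ‖Pv‖²`. The inequality above at the vector
`Pv`, combined with the Cauchy–Schwarz bound `‖Pv‖³ ≤ ⟪PPv, Pv⟫ ‖v‖`, yields `μₖ ≤ νₖ`. The unitary
`V` carries an eigenbasis of `R` to one of `PQP`.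
-/

section PositiveFunctional

variable {𝒜 : Type*} [Ring 𝒜] [StarRing 𝒜] [Algebra ℝ 𝒜] [TopologicalSpace 𝒜]
  [ContinuousFunctionalCalculus ℝ 𝒜 IsSelfAdjoint] [PartialOrder 𝒜] [StarOrderedRing 𝒜]
  {a : 𝒜} {f g : ℝ → ℝ}

theorem map_cfc_bilinear_nonneg (φ : 𝒜 →ₚ[ℝ] ℝ) (ha : IsSelfAdjoint a)
    (hf : ContinuousOn f (spectrum ℝ a)) (hg : ContinuousOn g (spectrum ℝ a)) {p q r s : ℝ}
    (h : ∀ x ∈ spectrum ℝ a, 0 ≤ p + q * f x + r * g x + s * (f x * g x)) :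
    0 ≤ p * φ 1 + q * φ (cfc f a) + r * φ (cfc g a) + s * φ (cfc f a * cfc g a) := by
  have expand : cfc (fun x ↦ p + q * f x + r * g x + s * (f x * g x)) a =
      p • (1 : 𝒜) + q • cfc f a + r • cfc g a + s • (cfc f a * cfc g a) := by
    rw [cfc_add .., cfc_add .., cfc_add .., cfc_const p a, cfc_const_mul q f a, cfc_const_mul r g a,
      cfc_const_mul s (fun x ↦ f x * g x) a, cfc_mul f g a, Algebra.algebraMap_eq_smul_one]
  simpa only [expand, map_add, map_smul, smul_eq_mul] using φ.map_nonneg (cfc_nonneg h)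

theorem map_cfc_mul_map_cfc_le (φ : 𝒜 →ₚ[ℝ] ℝ) (ha : IsSelfAdjoint a)
    (hf : ContinuousOn f (spectrum ℝ a)) (hg : ContinuousOn g (spectrum ℝ a))
    (hfg : MonovaryOn f g (spectrum ℝ a)) :
    φ (cfc f a) * φ (cfc g a) ≤ φ 1 * φ (cfc f a * cfc g a) := by
  have at_point : ∀ x ∈ spectrum ℝ a,
      0 ≤ φ (cfc f a * cfc g a) + -φ (cfc g a) * f x + -φ (cfc f a) * g x
        + φ 1 * (f x * g x) := by
    intro x hx
    have := map_cfc_bilinear_nonneg φ ha hf hg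
      (p := f x * g x) (q := -g x) (r := -f x) (s := 1) fun y hy ↦ by
        linarith [monovaryOn_iff_forall_mul_nonneg.mp hfg hx hy]
    linarith
  linarith [map_cfc_bilinear_nonneg φ ha hf hg at_point]

theorem sq_map_cfc_mul_map_cfc_le (φ : 𝒜 →ₚ[ℝ] ℝ) (ha : IsSelfAdjoint a)
    (hf : ContinuousOn f (spectrum ℝ a)) (hg : ContinuousOn g (spectrum ℝ a))
    (hfg : MonovaryOn f g (spectrum ℝ a)) (hf0 : ∀ x ∈ spectrum ℝ a, 0 ≤ f x)
    (hg0 : ∀ x ∈ spectrum ℝ a, 0 ≤ g x) :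
    φ (cfc f a) ^ 2 * φ (cfc g a) ≤ φ 1 ^ 2 * φ (cfc f a * cfc g a * cfc f a) := by
  have hφf : 0 ≤ φ (cfc f a) := φ.map_nonneg (cfc_nonneg hf0)
  have hφ1 : 0 ≤ φ 1 := φ.map_nonneg zero_le_one
  have chebyshev_f_g := map_cfc_mul_map_cfc_le φ ha hf hg hfg
  have chebyshev_f_gf : φ (cfc f a) * φ (cfc f a * cfc g a) ≤
      φ 1 * φ (cfc f a * cfc g a * cfc f a) := by
    have h := map_cfc_mul_map_cfc_le φ ha hf (hg.mul hf)
      (MonovaryOn.mul_right₀ hg0 hf0 hfg (monovaryOn_self f _))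
    have cfc_g_mul_f : cfc (g * f) a = cfc g a * cfc f a := cfc_mul g f a hg hf
    rwa [cfc_g_mul_f, ← mul_assoc, (cfc_commute_cfc g f a).eq] at h
  calc φ (cfc f a) ^ 2 * φ (cfc g a)
      = φ (cfc f a) * (φ (cfc f a) * φ (cfc g a)) := by ring
    _ ≤ φ (cfc f a) * (φ 1 * φ (cfc f a * cfc g a)) := by gcongr
    _ = φ 1 * (φ (cfc f a) * φ (cfc f a * cfc g a)) := by ring
    _ ≤ φ 1 * (φ 1 * φ (cfc f a * cfc g a * cfc f a)) := by gcongr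
    _ = φ 1 ^ 2 * φ (cfc f a * cfc g a * cfc f a) := by ring

end PositiveFunctional

section Operator

open scoped InnerProductSpace

variable {𝕜 E F : Type*} [RCLike 𝕜] [NormedAddCommGroup E] [InnerProductSpace 𝕜 E]
  [NormedAddCommGroup F] [InnerProductSpace 𝕜 F]

theorem sq_re_inner_apply_le_of_isPositive {T : E →ₗ[𝕜] E} (hT : T.IsPositive) (x y : E) :
    RCLike.re ⟪T x, y⟫_𝕜 ^ 2 ≤ RCLike.re ⟪T x, x⟫_𝕜 * RCLike.re ⟪T y, y⟫_𝕜 := by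
  let core : PreInnerProductSpace.Core 𝕜 E :=
    { inner := fun u v ↦ ⟪T u, v⟫_𝕜
      conj_inner_symm := fun u v ↦ by rw [inner_conj_symm, hT.isSymmetric]
      re_inner_nonneg := hT.re_inner_nonneg_left
      add_left := fun u v w ↦ by rw [map_add, inner_add_left]
      smul_left := fun u v c ↦ by rw [map_smul, inner_smul_left] }
  have norm_symm : ‖⟪T y, x⟫_𝕜‖ = ‖⟪T x, y⟫_𝕜‖ := by rw [hT.isSymmetric, norm_inner_symm]
  calc RCLike.re ⟪T x, y⟫_𝕜 ^ 2 ≤ ‖⟪T x, y⟫_𝕜‖ ^ 2 :=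
        sq_le_sq.mpr ((RCLike.abs_re_le_norm _).trans (le_abs_self _))
    _ = ‖⟪T x, y⟫_𝕜‖ * ‖⟪T y, x⟫_𝕜‖ := by rw [norm_symm, sq]
    _ ≤ _ := InnerProductSpace.Core.inner_mul_inner_self_le (c := core) x y

theorem norm_apply_pow_three_le_of_isPositive {T : E →ₗ[𝕜] E} (hT : T.IsPositive) (v : E) :
    ‖T v‖ ^ 3 ≤ RCLike.re ⟪T (T v), T v⟫_𝕜 * ‖v‖ := by
  rcases (norm_nonneg (T v)).eq_or_lt with h0 | hpos
  · simp [norm_eq_zero.mp h0.symm]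
  have hnonneg := hT.re_inner_nonneg_left (T v)
  have cauchy_schwarz : (‖T v‖ ^ 2) ^ 2 ≤
      RCLike.re ⟪T (T v), T v⟫_𝕜 * RCLike.re ⟪T v, v⟫_𝕜 := by
    simpa only [hT.isSymmetric (T v) v, inner_self_eq_norm_sq] using
      sq_re_inner_apply_le_of_isPositive hT (T v) v
  refine le_of_mul_le_mul_right ?_ hpos
  calc ‖T v‖ ^ 3 * ‖T v‖ = (‖T v‖ ^ 2) ^ 2 := by ring
    _ ≤ RCLike.re ⟪T (T v), T v⟫_𝕜 * RCLike.re ⟪T v, v⟫_𝕜 := cauchy_schwarz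
    _ ≤ RCLike.re ⟪T (T v), T v⟫_𝕜 * (‖T v‖ * ‖v‖) := by gcongr; exact re_inner_le_norm _ _
    _ = RCLike.re ⟪T (T v), T v⟫_𝕜 * ‖v‖ * ‖T v‖ := by ring

variable [FiniteDimensional 𝕜 E] [FiniteDimensional 𝕜 F] {n m : ℕ}

theorem re_inner_apply_self_eq_sum_eigenvalues {T : E →ₗ[𝕜] E} (hT : T.IsSymmetric)
    (hn : Module.finrank 𝕜 E = n) (v : E) :
    RCLike.re ⟪T v, v⟫_𝕜 =
      ∑ i, hT.eigenvalues hn i * ‖⟪hT.eigenvectorBasis hn i, v⟫_𝕜‖ ^ 2 := by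
  rw [← (hT.eigenvectorBasis hn).sum_inner_mul_inner, map_sum]
  refine Finset.sum_congr rfl fun i _ ↦ ?_
  rw [hT, hT.apply_eigenvectorBasis, inner_smul_right, mul_assoc, RCLike.re_ofReal_mul,
    inner_mul_symm_re_eq_norm, norm_mul, norm_inner_symm, sq]

theorem eigenvalues_mul_sq_norm_le {T : E →ₗ[𝕜] E} (hT : T.IsSymmetric)
    (hn : Module.finrank 𝕜 E = n) {k : Fin n} {v : E}
    (hv : ∀ i, k < i → ⟪hT.eigenvectorBasis hn i, v⟫_𝕜 = 0) :
    hT.eigenvalues hn k * ‖v‖ ^ 2 ≤ RCLike.re ⟪T v, v⟫_𝕜 := by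
  rw [re_inner_apply_self_eq_sum_eigenvalues hT hn,
    ← (hT.eigenvectorBasis hn).sum_sq_norm_inner_right, Finset.mul_sum]
  refine Finset.sum_le_sum fun i _ ↦ ?_
  rcases le_or_gt i k with hik | hki
  · gcongr
    exact hT.eigenvalues_antitone hn hik
  · simp [hv i hki]

theorem re_inner_apply_self_le_eigenvalues_mul {T : E →ₗ[𝕜] E} (hT : T.IsSymmetric)
    (hn : Module.finrank 𝕜 E = n) {k : Fin n} {v : E}
    (hv : ∀ i, i < k → ⟪hT.eigenvectorBasis hn i, v⟫_𝕜 = 0) :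
    RCLike.re ⟪T v, v⟫_𝕜 ≤ hT.eigenvalues hn k * ‖v‖ ^ 2 := by
  rw [re_inner_apply_self_eq_sum_eigenvalues hT hn,
    ← (hT.eigenvectorBasis hn).sum_sq_norm_inner_right, Finset.mul_sum]
  refine Finset.sum_le_sum fun i _ ↦ ?_
  rcases lt_or_ge i k with hik | hki
  · simp [hv i hik]
  · gcongr
    exact hT.eigenvalues_antitone hn hki

theorem exists_ne_zero_forall_apply_eq_zero {K V ι : Type*} [DivisionRing K] [AddCommGroup V]
    [Module K V] [FiniteDimensional K V] [Fintype ι] (φ : ι → V →ₗ[K] K)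
    (h : Fintype.card ι < Module.finrank K V) : ∃ v ≠ 0, ∀ i, φ i v = 0 := by
  have hker : LinearMap.ker (LinearMap.pi φ) ≠ ⊥ :=
    LinearMap.ker_ne_bot_of_finrank_lt (by rwa [Module.finrank_fintype_fun_eq_card])
  obtain ⟨v, hv, hv0⟩ := Submodule.exists_mem_ne_zero_of_ne_bot hker
  exact ⟨v, hv0, fun i ↦ congrFun (LinearMap.mem_ker.mp hv) i⟩

theorem exists_ne_zero_eigenvalues_mul_le_and_le {S : E →ₗ[𝕜] E} {T : F →ₗ[𝕜] F}
    (hS : S.IsSymmetric) (hT : T.IsSymmetric) (hn : Module.finrank 𝕜 E = n)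
    (hm : Module.finrank 𝕜 F = m) (L : E →ₗ[𝕜] F) {k : Fin n} {l : Fin m} (hlk : (l : ℕ) ≤ k) :
    ∃ v ≠ 0, hS.eigenvalues hn k * ‖v‖ ^ 2 ≤ RCLike.re ⟪S v, v⟫_𝕜 ∧
      RCLike.re ⟪T (L v), L v⟫_𝕜 ≤ hT.eigenvalues hm l * ‖L v‖ ^ 2 := by
  obtain ⟨v, hv0, hv⟩ := exists_ne_zero_forall_apply_eq_zero
    (Sum.elim (fun i : Finset.Ioi k ↦ innerₛₗ 𝕜 (hS.eigenvectorBasis hn i))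
      (fun j : Finset.Iio l ↦ innerₛₗ 𝕜 (hT.eigenvectorBasis hm j) ∘ₗ L))
    (by simp only [Fintype.card_sum, Fintype.card_coe, Fin.card_Ioi, Fin.card_Iio, hn]; omega)
  refine ⟨v, hv0, eigenvalues_mul_sq_norm_le hS hn fun i hi ↦ ?_,
    re_inner_apply_self_le_eigenvalues_mul hT hm fun j hj ↦ ?_⟩
  · exact hv (.inl ⟨i, Finset.mem_Ioi.mpr hi⟩)
  · exact hv (.inr ⟨j, Finset.mem_Iio.mpr hj⟩)

theorem eigenvalues_le_of_eq_comp_comp {P Q R S : E →ₗ[𝕜] E} (hP : P.IsPositive)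
    (hR : R.IsPositive) (hS : S.IsSymmetric) (hSPQ : S = P ∘ₗ Q ∘ₗ P)
    (hn : Module.finrank 𝕜 E = n)
    (h : ∀ v, RCLike.re ⟪P v, v⟫_𝕜 ^ 2 * RCLike.re ⟪Q v, v⟫_𝕜 ≤
      (‖v‖ ^ 2) ^ 2 * RCLike.re ⟪R v, v⟫_𝕜) (k : Fin n) :
    hS.eigenvalues hn k ≤ hR.isSymmetric.eigenvalues hn k := by
  obtain ⟨v, hv, hμ, hν⟩ :=
    exists_ne_zero_eigenvalues_mul_le_and_le hS hR.isSymmetric hn hn P (le_refl (k : ℕ))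
  set μ := hS.eigenvalues hn k
  set ν := hR.isSymmetric.eigenvalues hn k
  rcases le_or_gt μ 0 with hμ0 | hμ0
  · exact hμ0.trans (hR.nonneg_eigenvalues hn k)
  have hμQ : μ * ‖v‖ ^ 2 ≤ RCLike.re ⟪Q (P v), P v⟫_𝕜 := by
    simpa only [hSPQ, LinearMap.comp_apply, hP.isSymmetric (Q (P v)) v] using hμ
  have hPv : 0 < ‖P v‖ := by
    rw [norm_pos_iff]
    intro hPv
    have : 0 < μ * ‖v‖ ^ 2 := by positivity
    simp only [hPv, map_zero, inner_zero_left] at hμQ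
    linarith
  have hcube := norm_apply_pow_three_le_of_isPositive hP v
  refine le_of_mul_le_mul_right ?_ (pow_pos hPv 6)
  calc μ * ‖P v‖ ^ 6 = μ * (‖P v‖ ^ 3) ^ 2 := by ring
    _ ≤ μ * (RCLike.re ⟪P (P v), P v⟫_𝕜 * ‖v‖) ^ 2 := by gcongr
    _ = RCLike.re ⟪P (P v), P v⟫_𝕜 ^ 2 * (μ * ‖v‖ ^ 2) := by ring
    _ ≤ RCLike.re ⟪P (P v), P v⟫_𝕜 ^ 2 * RCLike.re ⟪Q (P v), P v⟫_𝕜 := by gcongr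
    _ ≤ (‖P v‖ ^ 2) ^ 2 * RCLike.re ⟪R (P v), P v⟫_𝕜 := h (P v)
    _ ≤ (‖P v‖ ^ 2) ^ 2 * (ν * ‖P v‖ ^ 2) := by gcongr
    _ = ν * ‖P v‖ ^ 6 := by ring

end Operator

section Matrix

open scoped MatrixOrder InnerProductSpace

variable {𝕜 m : Type*} [RCLike 𝕜] [Fintype m] [DecidableEq m]

theorem exists_unitary_le_conj_of_eigenvalues_le {X Y : Matrix m m 𝕜} (hX : X.IsHermitian)
    (hY : Y.IsHermitian) (h : hX.eigenvalues ≤ hY.eigenvalues) :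
    ∃ V ∈ Matrix.unitaryGroup m 𝕜, X ≤ V * Y * Vᴴ := by
  let U := hX.eigenvectorUnitary
  let W := hY.eigenvectorUnitary
  refine ⟨U * star W, (U * star W).2, ?_⟩
  have diagonal_le : Matrix.diagonal (RCLike.ofReal ∘ hX.eigenvalues : m → 𝕜) ≤
      Matrix.diagonal (RCLike.ofReal ∘ hY.eigenvalues) := by
    rw [Matrix.le_iff, Matrix.diagonal_sub]
    exact .diagonal fun i ↦ by simpa using h i
  calc X = Unitary.conjStarAlgAut 𝕜 _ U (Matrix.diagonal (RCLike.ofReal ∘ hX.eigenvalues)) :=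
        hX.spectral_theorem
    _ ≤ Unitary.conjStarAlgAut 𝕜 _ U (Matrix.diagonal (RCLike.ofReal ∘ hY.eigenvalues)) :=
        star_right_conjugate_le_conjugate diagonal_le _
    _ = Unitary.conjStarAlgAut 𝕜 _ (U * star W) Y := by
        rw [Unitary.conjStarAlgAut_mul_apply, hY.conjStarAlgAut_star_eigenvectorUnitary]

/-- The positive functional `X ↦ re ⟪X v, v⟫` on matrices; for a unit vector `v` it is the real part
of the vector state of `v`. -/
noncomputable def vectorFunctional (v : EuclideanSpace 𝕜 m) : Matrix m m 𝕜 →ₚ[ℝ] ℝ :=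
  .mk₀
    { toFun X := RCLike.re ⟪X.toEuclideanLin v, v⟫_𝕜
      map_add' X Y := by simp [inner_add_left]
      map_smul' c X := by
        rw [RCLike.real_smul_eq_coe_smul (K := 𝕜), map_smul, LinearMap.smul_apply, inner_smul_left,
          RCLike.conj_ofReal, RCLike.re_ofReal_mul, RingHom.id_apply, smul_eq_mul] }
    fun X hX ↦ (Matrix.isPositive_toEuclideanLin_iff.mpr
      (Matrix.nonneg_iff_posSemidef.mp hX)).re_inner_nonneg_left v

theorem vectorFunctional_apply (v : EuclideanSpace 𝕜 m) (X : Matrix m m 𝕜) :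
    vectorFunctional v X = RCLike.re ⟪X.toEuclideanLin v, v⟫_𝕜 := rfl

theorem vectorFunctional_one (v : EuclideanSpace 𝕜 m) :
    vectorFunctional v (1 : Matrix m m 𝕜) = ‖v‖ ^ 2 := by
  rw [vectorFunctional_apply, Matrix.toLpLin_one, LinearMap.id_apply, inner_self_eq_norm_sq]

theorem exists_unitary_mul_mul_le_conj {P Q R : Matrix m m 𝕜} (hP : 0 ≤ P) (hQ : Q.IsHermitian)
    (hR : 0 ≤ R)
    (h : ∀ v, vectorFunctional v P ^ 2 * vectorFunctional v Q ≤
      vectorFunctional v 1 ^ 2 * vectorFunctional v R) :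
    ∃ V ∈ Matrix.unitaryGroup m 𝕜, P * Q * P ≤ V * R * Vᴴ := by
  rw [Matrix.nonneg_iff_posSemidef] at hP hR
  have hPQP : (P * Q * P).IsHermitian := by
    simpa only [hP.isHermitian.eq] using Matrix.isHermitian_mul_mul_conjTranspose P hQ
  have toEuclideanLin_mul_mul :
      (P * Q * P).toEuclideanLin = P.toEuclideanLin ∘ₗ Q.toEuclideanLin ∘ₗ P.toEuclideanLin := by
    rw [mul_assoc, Matrix.toLpLin_mul_same, Matrix.toLpLin_mul_same]
  have eigenvalues₀_le : ∀ k, hPQP.eigenvalues₀ k ≤ hR.isHermitian.eigenvalues₀ k :=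
    eigenvalues_le_of_eq_comp_comp (Matrix.isPositive_toEuclideanLin_iff.mpr hP)
      (Matrix.isPositive_toEuclideanLin_iff.mpr hR)
      (Matrix.isSymmetric_toEuclideanLin_iff.mpr hPQP) toEuclideanLin_mul_mul
      finrank_euclideanSpace fun v ↦ vectorFunctional_one v ▸ h v
  exact exists_unitary_le_conj_of_eigenvalues_le hPQP hR.isHermitian fun i ↦ eigenvalues₀_le _

theorem chebyshev_subunital_positive_map_general {𝒜 : Type*} [Ring 𝒜] [StarRing 𝒜] [Algebra ℝ 𝒜]
    [TopologicalSpace 𝒜] [ContinuousFunctionalCalculus ℝ 𝒜 IsSelfAdjoint] [PartialOrder 𝒜]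
    [StarOrderedRing 𝒜] {a : 𝒜} (ha : IsSelfAdjoint a) {f g : ℝ → ℝ}
    (hf : ContinuousOn f (spectrum ℝ a)) (hg : ContinuousOn g (spectrum ℝ a))
    (hfg : MonovaryOn f g (spectrum ℝ a)) (hf0 : ∀ x ∈ spectrum ℝ a, 0 ≤ f x)
    (hg0 : ∀ x ∈ spectrum ℝ a, 0 ≤ g x) (Φ : 𝒜 →ₚ[ℝ] Matrix m m 𝕜) (hΦ : Φ 1 ≤ 1) :
    ∃ V ∈ Matrix.unitaryGroup m 𝕜,
      Φ (cfc f a) * Φ (cfc g a) * Φ (cfc f a) ≤ V * Φ (cfc f a * cfc g a * cfc f a) * Vᴴ := by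
  have hA : 0 ≤ cfc f a := cfc_nonneg hf0
  have hB : 0 ≤ cfc g a := cfc_nonneg hg0
  have hABA : 0 ≤ cfc f a * cfc g a * cfc f a := (IsSelfAdjoint.of_nonneg hA).conjugate_nonneg hB
  refine exists_unitary_mul_mul_le_conj (Φ.map_nonneg hA)
    (Matrix.nonneg_iff_posSemidef.mp (Φ.map_nonneg hB)).isHermitian (Φ.map_nonneg hABA) fun v ↦ ?_
  let φ := (vectorFunctional v).comp Φ
  have hφ1 : φ 1 ≤ vectorFunctional v 1 := OrderHomClass.mono (vectorFunctional v) hΦ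
  calc φ (cfc f a) ^ 2 * φ (cfc g a) ≤ φ 1 ^ 2 * φ (cfc f a * cfc g a * cfc f a) :=
        sq_map_cfc_mul_map_cfc_le φ ha hf hg hfg hf0 hg0
    _ ≤ vectorFunctional v 1 ^ 2 * φ (cfc f a * cfc g a * cfc f a) := by
        gcongr
        · exact φ.map_nonneg hABA
        · exact φ.map_nonneg zero_le_one

end Matrix

/-- For a monotone pair `(A, B)` and a sub-unital positive linear map `Φ` (`Φ(I) ≤ I`), there
is a unitary `V` with `Φ(A) Φ(B) Φ(A) ≤ V Φ(ABA) V*`. -/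
theorem chebyshev_subunital_positive_map {n d : ℕ} (A B : Matrix (Fin n) (Fin n) ℂ)
    (hAB : MonotonePair A B)
    (Φ : Matrix (Fin n) (Fin n) ℂ →ₗ[ℂ] Matrix (Fin d) (Fin d) ℂ)
    (hΦ1 : loewnerLE (Φ 1) 1)
    (hΦpos : ∀ X : Matrix (Fin n) (Fin n) ℂ, X.PosSemidef → (Φ X).PosSemidef) :
    ∃ V : Matrix (Fin d) (Fin d) ℂ, V ∈ Matrix.unitaryGroup (Fin d) ℂ ∧
      loewnerLE (Φ A * Φ B * Φ A) (V * Φ (A * B * A) * Vᴴ) := by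
  obtain ⟨C, f, g, hC, hf, hg, hf0, hg0, rfl, rfl⟩ := hAB
  have hspec : spectrum ℝ C ⊆ Set.Ici 0 := by
    rw [hC.isHermitian.spectrum_real_eq_range_eigenvalues]
    exact Set.range_subset_iff.mpr hC.eigenvalues_nonneg
  open scoped MatrixOrder in
  exact chebyshev_subunital_positive_map_general hC.isHermitian.isSelfAdjoint
    (C.finite_real_spectrum.continuousOn f) (C.finite_real_spectrum.continuousOn g)
    ((hf.mono hspec).monovaryOn (hg.mono hspec)) (fun x hx ↦ hf0 x (hspec hx))
    (fun x hx ↦ hg0 x (hspec hx))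
    (.mk₀ (Φ.restrictScalars ℝ) fun X hX ↦
      Matrix.nonneg_iff_posSemidef.mpr (hΦpos X (Matrix.nonneg_iff_posSemidef.mp hX))) hΦ1
end
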